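/- For boundary data (r1, v1, r2, v2) with r1 ≠ 0 and r2 ≠ 0, define the achievable final-mass set A(r1, v1, r2, v2) = { m(tf) : (r, v, m, u, α) is a controlled two-body trajectory on [t0, tf] with r(t0) = r1, v(t0) = v1, r(tf) = r2, v(tf) = v2 }. Then for every surjective linear isometry R : ℝ³ → ℝ³, A(R r1, R v1, R r2, R v2) = A(r1, v1, r2, v2). In particular the optimal (supremal) final mass, and hence the minimal fuel consumption Δv, of the fixed-time rendezvous problem is invariant under simultaneous rotation of the boundary states. -/

import Mathlib

/-!
The equations of motion are equivariant under linear isometries: if `(r, v, m, u, α)` is a controlled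
trajectory and `R` is a linear isometry, then so is `(R ∘ r, R ∘ v, m, u, R ∘ α)`, because `R` commutes
with differentiation and scalar multiplication and preserves the norms entering the gravity term and
the constraint on `α`. The mass history is unchanged, so every final mass achievable for given boundary
data is achievable for the rotated data (`achievableFinalMass_subset_map`). Surjectivity makes `R`
invertible, and applying this to the inverse isometry gives the reverse inclusion.
-/

/-- A controlled two-body trajectory on `[t0, tf]`. -/
def IsControlledTraj (μ Tmax Isp g0 m0 t0 tf : ℝ)
    (r v α : ℝ → EuclideanSpace ℝ (Fin 3)) (m u : ℝ → ℝ) : Prop :=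
  (∀ t ∈ Set.Icc t0 tf, r t ≠ 0) ∧
  (∀ t ∈ Set.Icc t0 tf, 0 < m t) ∧
  m t0 = m0 ∧
  (∀ t ∈ Set.Icc t0 tf, u t ∈ Set.Icc (0 : ℝ) 1) ∧
  (∀ t ∈ Set.Icc t0 tf, ‖α t‖ = 1) ∧
  (∀ t ∈ Set.Icc t0 tf, HasDerivAt r (v t) t) ∧
  (∀ t ∈ Set.Icc t0 tf,
    HasDerivAt v ((-(μ / ‖r t‖ ^ 3)) • r t + (Tmax / m t * u t) • α t) t) ∧
  (∀ t ∈ Set.Icc t0 tf, HasDerivAt m (-(Tmax * u t) / (Isp * g0)) t)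

/-- The set of achievable final masses of the fixed-time rendezvous problem
with boundary data `(r1, v1, r2, v2)`. -/
def AchievableFinalMass (μ Tmax Isp g0 m0 t0 tf : ℝ)
    (r1 v1 r2 v2 : EuclideanSpace ℝ (Fin 3)) : Set ℝ :=
  { mf | ∃ r v α m u, IsControlledTraj μ Tmax Isp g0 m0 t0 tf r v α m u ∧
      r t0 = r1 ∧ v t0 = v1 ∧ r tf = r2 ∧ v tf = v2 ∧ m tf = mf }

theorem IsControlledTraj.map {μ Tmax Isp g0 m0 t0 tf : ℝ}
    {r v α : ℝ → EuclideanSpace ℝ (Fin 3)} {m u : ℝ → ℝ}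
    (h : IsControlledTraj μ Tmax Isp g0 m0 t0 tf r v α m u)
    (R : EuclideanSpace ℝ (Fin 3) →ₗᵢ[ℝ] EuclideanSpace ℝ (Fin 3)) :
    IsControlledTraj μ Tmax Isp g0 m0 t0 tf
      (fun t => R (r t)) (fun t => R (v t)) (fun t => R (α t)) m u := by
  obtain ⟨hr, hm, hm0, hu, hα, hdr, hdv, hdm⟩ := h
  refine ⟨fun t ht h0 => hr t ht ?_, hm, hm0, hu, fun t ht => ?_, fun t ht => ?_,
    fun t ht => ?_, hdm⟩
  · exact R.injective (h0.trans (map_zero R).symm)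
  · rw [R.norm_map, hα t ht]
  · exact R.toContinuousLinearMap.hasFDerivAt.comp_hasDerivAt t (hdr t ht)
  · have key := R.toContinuousLinearMap.hasFDerivAt.comp_hasDerivAt t (hdv t ht)
    rw [map_add, map_smul, map_smul] at key
    rw [R.norm_map]
    exact key

theorem achievableFinalMass_subset_map (μ Tmax Isp g0 m0 t0 tf : ℝ)
    (r1 v1 r2 v2 : EuclideanSpace ℝ (Fin 3))
    (R : EuclideanSpace ℝ (Fin 3) →ₗᵢ[ℝ] EuclideanSpace ℝ (Fin 3)) :
    AchievableFinalMass μ Tmax Isp g0 m0 t0 tf r1 v1 r2 v2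
      ⊆ AchievableFinalMass μ Tmax Isp g0 m0 t0 tf (R r1) (R v1) (R r2) (R v2) := by
  rintro _ ⟨r, v, α, m, u, h, rfl, rfl, rfl, rfl, rfl⟩
  exact ⟨_, _, _, m, u, h.map R, rfl, rfl, rfl, rfl, rfl⟩

/-- Rotational invariance of the achievable final-mass set (hence of the
optimal final mass and minimal fuel consumption) under simultaneous rotation
of the boundary states by a surjective linear isometry. -/
theorem achievable_final_mass_rotation_invariant
    (μ Tmax Isp g0 m0 t0 tf : ℝ)
    (hμ : 0 < μ) (hT : 0 < Tmax) (hI : 0 < Isp) (hg : 0 < g0)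
    (hm0 : 0 < m0) (ht : t0 < tf)
    (r1 v1 r2 v2 : EuclideanSpace ℝ (Fin 3)) (hr1 : r1 ≠ 0) (hr2 : r2 ≠ 0)
    (R : EuclideanSpace ℝ (Fin 3) →ₗᵢ[ℝ] EuclideanSpace ℝ (Fin 3))
    (hR : Function.Surjective R) :
    AchievableFinalMass μ Tmax Isp g0 m0 t0 tf (R r1) (R v1) (R r2) (R v2)
      = AchievableFinalMass μ Tmax Isp g0 m0 t0 tf r1 v1 r2 v2 := by
  refine Set.Subset.antisymm ?_ (achievableFinalMass_subset_map _ _ _ _ _ _ _ _ _ _ _ R)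
  have hinv : ∀ x, (LinearIsometryEquiv.ofSurjective R hR).symm (R x) = x := fun x =>
    (LinearIsometryEquiv.ofSurjective R hR).symm_apply_apply x
  have key := achievableFinalMass_subset_map μ Tmax Isp g0 m0 t0 tf (R r1) (R v1) (R r2) (R v2)
    (LinearIsometryEquiv.ofSurjective R hR).symm.toLinearIsometry
  simpa only [LinearIsometryEquiv.coe_toLinearIsometry, hinv] using key
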